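/- arXiv:1405.4920 — 6 statements merged into one kernel-verified Lean document; each statement's English description precedes it below -/
import Mathlib

section
/- Let φ : (0,∞) → ℝ be twice continuously differentiable with φ'(z) > 0 for all z > 0, let u : (0,∞) → (0,∞) be continuously differentiable, and let ψ : (0,∞) → ℝ be twice continuously differentiable. Suppose that for all z > 0: u(z)²·(φ'(z) + z·φ''(z)) = ψ'(z) + z·ψ''(z) and u(z)²·φ'(z) = -ψ'(z). Then there exists a constant c > 0 such that u(z) = c/(z·φ'(z)) for all z > 0. -/
/-!
Substituting `ψ' = -u²φ'` into the first equation turns it into `2u · (u · z · φ')' = 0`.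
As `u > 0`, the function `u · z · φ'` has zero derivative on the connected set `(0, ∞)`, so it is a
constant, which is positive because each factor is.
-/

open Set

/-- Uniqueness assertion of Theorem 1.3: any positive conformal factor `u` solving the
conformal-compactification system must equal `c/(z·φ')` for some constant `c > 0`. -/
theorem stmt_1 (φ ψ u : ℝ → ℝ)
    (hφ : ContDiffOn ℝ 2 φ (Ioi (0:ℝ)))
    (hφ' : ∀ z > (0:ℝ), 0 < deriv φ z)
    (hu : ContDiffOn ℝ 1 u (Ioi (0:ℝ)))
    (hupos : ∀ z > (0:ℝ), 0 < u z)
    (hψ : ContDiffOn ℝ 2 ψ (Ioi (0:ℝ)))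
    (heq1 : ∀ z > (0:ℝ),
      u z ^ 2 * (deriv φ z + z * deriv (deriv φ) z)
        = deriv ψ z + z * deriv (deriv ψ) z)
    (heq2 : ∀ z > (0:ℝ), u z ^ 2 * deriv φ z = -deriv ψ z) :
    ∃ c > (0:ℝ), ∀ z > (0:ℝ), u z = c / (z * deriv φ z) := by
  have hdiff : ∀ z > (0:ℝ), DifferentiableAt ℝ (deriv φ) z := fun z hz =>
    ((hφ.deriv_of_isOpen (m := 1) isOpen_Ioi (by norm_num)).differentiableOn
      (by norm_num)).differentiableAt (Ioi_mem_nhds hz)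
  have key : ∀ z > (0:ℝ), HasDerivAt (fun x => u x * (x * deriv φ x)) 0 z := by
    intro z hz
    have hu1 : HasDerivAt u (deriv u z) z :=
      ((hu.differentiableOn (by norm_num)).differentiableAt (Ioi_mem_nhds hz)).hasDerivAt
    have hp := (hdiff z hz).hasDerivAt
    have hψ2 : deriv (deriv ψ) z
        = -(2 * u z * deriv u z * deriv φ z + u z ^ 2 * deriv (deriv φ) z) := by
      have h1 := ((hu1.pow 2).mul hp).neg
      have h2 : deriv ψ =ᶠ[nhds z] -((u ^ 2) * deriv φ) := by
        filter_upwards [Ioi_mem_nhds hz] with x hx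
        have := heq2 x hx
        simp only [Pi.neg_apply, Pi.mul_apply, Pi.pow_apply]
        linarith
      rw [h2.deriv_eq, h1.deriv]
      simp
    have h0 : deriv u z * (z * deriv φ z)
        + u z * (1 * deriv φ z + z * deriv (deriv φ) z) = 0 := by
      have e1 := heq1 z hz
      have e2 := heq2 z hz
      rw [hψ2] at e1
      have h : 2 * u z * (deriv u z * (z * deriv φ z)
          + u z * (1 * deriv φ z + z * deriv (deriv φ) z)) = 0 := by
        linear_combination e1 + e2
      exact (mul_eq_zero.mp h).resolve_left (mul_pos two_pos (hupos z hz)).ne'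
    have h3 := hu1.mul ((hasDerivAt_id' z).mul hp)
    exact h3.congr_deriv h0
  refine ⟨u 1 * (1 * deriv φ 1), ?_, fun z hz => ?_⟩
  · have := hupos 1 one_pos
    have := hφ' 1 one_pos
    positivity
  · have hpos : 0 < z * deriv φ z := mul_pos hz (hφ' z hz)
    rw [eq_div_iff hpos.ne']
    exact isOpen_Ioi.is_const_of_deriv_eq_zero isPreconnected_Ioi
      (fun x hx => (key x hx).differentiableAt.differentiableWithinAt)
      (fun x hx => (key x hx).deriv) hz (mem_Ioi.mpr one_pos)
end

section
/- Let φ : (0,∞) → ℝ be twice continuously differentiable with φ'(z) > 0 for all z > 0, let u : (0,∞) → (0,∞) be continuously differentiable, and let ψ : (0,∞) → ℝ be twice continuously differentiable, satisfying for all z > 0: u(z)²·(φ'(z) + z·φ''(z)) = ψ'(z) + z·ψ''(z) and u(z)²·φ'(z) = -ψ'(z). Then there exists c > 0 such that ψ'(z) = -c²/(z²·φ'(z)) for all z > 0; in particular ψ differs from −c²·∫ (z²·φ'(z))⁻¹ dz by a constant. -/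
/-!
Write `P = φ'` and `Q = ψ'`. Multiplying the first equation by `P` and replacing `u² P` by `-Q`
gives `2 P Q + z (P' Q + P Q') = 0`, that is, `(z² P Q)' = 0`. Hence `z² P Q` is constant on the
half-line, and by the second equation at `z = 1` its value is `-(u(1) P(1))²`, so `c = u(1) P(1)`.
The statement about primitives follows because `ψ + c² Ψ` has zero derivative.
-/

open Set

/-- A function with zero derivative on the (connected) half-line `(0, ∞)` is constant there. -/
lemma eq_one_of_hasDerivAt_zero {f : ℝ → ℝ} (hf : ∀ z > (0:ℝ), HasDerivAt f 0 z) :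
    ∀ z > (0:ℝ), f z = f 1 := fun z hz =>
  isOpen_Ioi.is_const_of_deriv_eq_zero (convex_Ioi (0:ℝ)).isPreconnected
    (fun x hx => (hf x hx).differentiableAt.differentiableWithinAt)
    (fun x hx => (hf x hx).deriv) hz (mem_Ioi.2 one_pos)

lemma hasDerivAt_of_contDiffOn_two {f : ℝ → ℝ} (hf : ContDiffOn ℝ 2 f (Ioi (0:ℝ)))
    {z : ℝ} (hz : 0 < z) :
    HasDerivAt f (deriv f z) z ∧ HasDerivAt (deriv f) (deriv (deriv f) z) z := by
  have h1 : ContDiffOn ℝ 1 (deriv f) (Ioi (0:ℝ)) :=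
    hf.deriv_of_isOpen isOpen_Ioi (by norm_num)
  have hn : Ioi (0:ℝ) ∈ nhds z := Ioi_mem_nhds hz
  exact ⟨((hf.differentiableOn (by norm_num)).differentiableAt hn).hasDerivAt,
    ((h1.differentiableOn (by norm_num)).differentiableAt hn).hasDerivAt⟩


/-- Corollary 1.4: a solution `ψ` of the conformal-compactification system satisfies
`ψ' = -c²/(z²·φ')` for some `c > 0`; in particular `ψ` differs from
`-c²·∫(z²·φ')⁻¹ dz` by a constant. -/
theorem stmt_2 (φ ψ u : ℝ → ℝ)
    (hφ : ContDiffOn ℝ 2 φ (Ioi (0:ℝ)))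
    (hφ' : ∀ z > (0:ℝ), 0 < deriv φ z)
    (hu : ContDiffOn ℝ 1 u (Ioi (0:ℝ)))
    (hupos : ∀ z > (0:ℝ), 0 < u z)
    (hψ : ContDiffOn ℝ 2 ψ (Ioi (0:ℝ)))
    (heq1 : ∀ z > (0:ℝ),
      u z ^ 2 * (deriv φ z + z * deriv (deriv φ) z)
        = deriv ψ z + z * deriv (deriv ψ) z)
    (heq2 : ∀ z > (0:ℝ), u z ^ 2 * deriv φ z = -deriv ψ z) :
    ∃ c > (0:ℝ),
      (∀ z > (0:ℝ), deriv ψ z = -(c ^ 2) / (z ^ 2 * deriv φ z)) ∧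
      (∀ Ψ : ℝ → ℝ, (∀ z > (0:ℝ), HasDerivAt Ψ (1 / (z ^ 2 * deriv φ z)) z) →
        ∃ C : ℝ, ∀ z > (0:ℝ), ψ z = -(c ^ 2) * Ψ z + C) := by
  have hconst := eq_one_of_hasDerivAt_zero (f := fun z => z ^ 2 * (deriv φ z * deriv ψ z)) (by
    intro z hz
    have hP := (hasDerivAt_of_contDiffOn_two hφ hz).2
    have hQ := (hasDerivAt_of_contDiffOn_two hψ hz).2
    refine ((hasDerivAt_pow 2 z).mul (hP.mul hQ)).congr_deriv ?_
    simp only [Pi.mul_apply]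
    push_cast
    linear_combination (-z * deriv φ z) * heq1 z hz
      + z * (deriv φ z + z * deriv (deriv φ) z) * heq2 z hz)
  have hform : ∀ z > (0:ℝ), deriv ψ z = -((u 1 * deriv φ 1) ^ 2) / (z ^ 2 * deriv φ z) := by
    intro z hz
    have hP := hφ' z hz
    have h := hconst z hz
    rw [eq_div_iff (by positivity)]
    linear_combination h + deriv φ 1 * heq2 1 one_pos
  refine ⟨u 1 * deriv φ 1, mul_pos (hupos 1 one_pos) (hφ' 1 one_pos), hform, fun Ψ hΨ => ?_⟩
  have hconst' := eq_one_of_hasDerivAt_zero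
    (f := fun z => ψ z + (u 1 * deriv φ 1) ^ 2 * Ψ z) (by
    intro z hz
    refine ((hasDerivAt_of_contDiffOn_two hψ hz).1.add
      ((hΨ z hz).const_mul ((u 1 * deriv φ 1) ^ 2))).congr_deriv ?_
    rw [hform z hz]
    ring)
  exact ⟨ψ 1 + (u 1 * deriv φ 1) ^ 2 * Ψ 1, fun z hz => by linear_combination hconst' z hz⟩
end

section
/- Let φ : (0,∞) → ℝ be twice continuously differentiable with φ'(z) > 0 for all z > 0, let u : (0,∞) → (0,∞) be continuously differentiable, and let ψ : (0,∞) → ℝ be twice continuously differentiable, satisfying for all z > 0: u(z)²·(φ'(z) + z·φ''(z)) = ψ'(z) + z·ψ''(z) and u(z)²·φ'(z) = -ψ'(z). Then for all z > 0, u'(z)/u(z) = -(φ'(z) + z·φ''(z))/(z·φ'(z)); that is, the logarithmic derivative of u equals minus the logarithmic derivative of z ↦ z·φ'(z). -/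
open Set

/-!
Differentiating `u² φ' = -ψ'` gives `ψ'' = -(2 u u' φ' + u² φ'')`. Inserting `ψ'` and `ψ''` into
`u² (φ' + z φ'') = ψ' + z ψ''` yields `2 u² (φ' + z φ'') = -2 z u u' φ'`, and the claim follows
on dividing by `2 u² z φ'`, which is positive.
-/

/-- Key intermediate derivation in the proof of Theorem 1.3:
`(log u)' = -(log(z·φ'))'`, i.e. `u'/u = -(φ' + zφ'')/(z·φ')`. -/
theorem stmt_3 (φ ψ u : ℝ → ℝ)
    (hφ : ContDiffOn ℝ 2 φ (Ioi (0:ℝ)))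
    (hφ' : ∀ z > (0:ℝ), 0 < deriv φ z)
    (hu : ContDiffOn ℝ 1 u (Ioi (0:ℝ)))
    (hupos : ∀ z > (0:ℝ), 0 < u z)
    (hψ : ContDiffOn ℝ 2 ψ (Ioi (0:ℝ)))
    (heq1 : ∀ z > (0:ℝ),
      u z ^ 2 * (deriv φ z + z * deriv (deriv φ) z)
        = deriv ψ z + z * deriv (deriv ψ) z)
    (heq2 : ∀ z > (0:ℝ), u z ^ 2 * deriv φ z = -deriv ψ z) :
    ∀ z > (0:ℝ),
      deriv u z / u z
        = -((deriv φ z + z * deriv (deriv φ) z) / (z * deriv φ z)) := by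
  intro z hz
  have hnhds : Ioi (0:ℝ) ∈ nhds z := Ioi_mem_nhds hz
  have hud : HasDerivAt u (deriv u z) z :=
    ((hu.contDiffAt hnhds).differentiableAt (by norm_num)).hasDerivAt
  have hφd : HasDerivAt (deriv φ) (deriv (deriv φ) z) z :=
    (((hφ.deriv_of_isOpen (m := 1) isOpen_Ioi (by norm_num)).contDiffAt
      hnhds).differentiableAt (by norm_num)).hasDerivAt
  have hψ'' : deriv (deriv ψ) z
      = -(2 * u z * deriv u z * deriv φ z + u z ^ 2 * deriv (deriv φ) z) := by
    have hd := ((hud.pow 2).mul hφd).neg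
    -- `heq2` holds on a neighbourhood of `z`, so it may be differentiated there.
    have hev : deriv ψ =ᶠ[nhds z] -(u ^ 2 * deriv φ) := by
      filter_upwards [hnhds] with x hx
      have := heq2 x hx
      simp only [Pi.neg_apply, Pi.mul_apply, Pi.pow_apply]
      linarith
    rw [(hd.congr_of_eventuallyEq hev).deriv]
    simp
  have h1 := heq1 z hz
  have h2 := heq2 z hz
  have hu0 : u z ≠ 0 := (hupos z hz).ne'
  have hφ0 : deriv φ z ≠ 0 := (hφ' z hz).ne'
  have hz0 : z ≠ 0 := ne_of_gt hz
  have key : deriv u z * (z * deriv φ z)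
      = -(deriv φ z + z * deriv (deriv φ) z) * u z := by
    rw [hψ''] at h1
    apply mul_left_cancel₀ hu0
    linear_combination (1/2) * h1 + (1/2) * h2
  rw [← neg_div, div_eq_div_iff hu0 (mul_ne_zero hz0 hφ0)]
  exact key
end

section
/- Let φ : (0,∞) → ℝ be twice continuously differentiable with φ'(z) > 0 and φ'(z) + z·φ''(z) > 0 for all z > 0. Let ψ : (0,∞) → ℝ be an antiderivative of z ↦ -1/(z²·φ'(z)), and define η : (0,∞) → ℝ by η(ξ) = ψ(1/ξ). Then for all ξ > 0: η'(ξ) = 1/φ'(1/ξ) > 0, and (d/dξ)(ξ·η'(ξ)) = (φ'(1/ξ) + (1/ξ)·φ''(1/ξ))/φ'(1/ξ)² > 0. -/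
/-!
By the chain rule, `η'(ξ) = ψ'(1/ξ) · (-1/ξ²)`, and the two factors of `ξ²` cancel, leaving
`η'(ξ) = 1/φ'(1/ξ)`. This identity holds on the open half-line, so `t ↦ t * η'(t)` agrees near `ξ`
with `t ↦ t / φ'(1/t)`, which the quotient rule differentiates because `φ'` is `C¹` there.
-/

open Set

/-- The compactified potential again satisfies the Kähler positivity conditions:
with `ψ` an antiderivative of `z ↦ -1/(z²·φ')` and `η(ξ) = ψ(1/ξ)`, one has
`η'(ξ) = 1/φ'(1/ξ) > 0` and `(ξ·η')'(ξ) = (φ'(1/ξ) + (1/ξ)·φ''(1/ξ))/φ'(1/ξ)² > 0`. -/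
theorem stmt_4 (φ ψ η : ℝ → ℝ)
    (hφ : ContDiffOn ℝ 2 φ (Ioi (0:ℝ)))
    (hφ' : ∀ z > (0:ℝ), 0 < deriv φ z)
    (hφ'' : ∀ z > (0:ℝ), 0 < deriv φ z + z * deriv (deriv φ) z)
    (hψ : ∀ z > (0:ℝ), HasDerivAt ψ (-(1 / (z ^ 2 * deriv φ z))) z)
    (hη : ∀ ξ > (0:ℝ), η ξ = ψ (1 / ξ)) :
    ∀ ξ > (0:ℝ),
      (deriv η ξ = 1 / deriv φ (1 / ξ) ∧ 0 < deriv η ξ) ∧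
      (deriv (fun t => t * deriv η t) ξ
          = (deriv φ (1 / ξ) + (1 / ξ) * deriv (deriv φ) (1 / ξ))
              / (deriv φ (1 / ξ)) ^ 2 ∧
        0 < deriv (fun t => t * deriv η t) ξ) := by
  have hinv : ∀ ξ > (0:ℝ), HasDerivAt (fun t : ℝ => 1 / t) (-(ξ ^ 2)⁻¹) ξ := fun ξ hξ => by
    simpa only [one_div] using hasDerivAt_inv hξ.ne'
  have hη' : ∀ ξ > (0:ℝ), deriv η ξ = 1 / deriv φ (1 / ξ) := fun ξ hξ => by
    have hp := (hφ' (1 / ξ) (one_div_pos.2 hξ)).ne'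
    have hcomp : HasDerivAt (fun t => ψ (1 / t)) _ ξ :=
      (hψ (1 / ξ) (one_div_pos.2 hξ)).comp ξ (hinv ξ hξ)
    have heq : η =ᶠ[nhds ξ] fun t => ψ (1 / t) := by
      filter_upwards [Ioi_mem_nhds hξ] with t ht using hη t ht
    rw [heq.deriv_eq, hcomp.deriv]
    field_simp
  intro ξ hξ
  have hz : 0 < 1 / ξ := one_div_pos.2 hξ
  have hp := hφ' _ hz
  have hφd : HasDerivAt (deriv φ) (deriv (deriv φ) (1 / ξ)) (1 / ξ) := by
    have h1 : ContDiffOn ℝ 1 (deriv φ) (Ioi (0:ℝ)) :=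
      hφ.deriv_of_isOpen isOpen_Ioi (by norm_num)
    exact ((h1.differentiableOn one_ne_zero).differentiableAt (Ioi_mem_nhds hz)).hasDerivAt
  have hcomp : HasDerivAt (fun t => deriv φ (1 / t)) _ ξ := hφd.comp ξ (hinv ξ hξ)
  have heq : (fun t => t * deriv η t) =ᶠ[nhds ξ] fun t => t / deriv φ (1 / t) := by
    filter_upwards [Ioi_mem_nhds hξ] with t ht
    rw [hη' t ht, mul_one_div]
  have hmain : deriv (fun t => t * deriv η t) ξ
      = (deriv φ (1 / ξ) + (1 / ξ) * deriv (deriv φ) (1 / ξ)) / (deriv φ (1 / ξ)) ^ 2 := by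
    have hquot : HasDerivAt (fun t => t / deriv φ (1 / t)) _ ξ :=
      (hasDerivAt_id' ξ).fun_div hcomp hp.ne'
    rw [heq.deriv_eq, hquot.deriv]
    congr 1
    field_simp
    ring
  refine ⟨⟨hη' ξ hξ, ?_⟩, hmain, ?_⟩
  · rw [hη' ξ hξ]
    exact one_div_pos.2 hp
  · rw [hmain]
    exact div_pos (hφ'' _ hz) (pow_pos hp 2)
end

section
/- Let η : (0,∞) → ℝ be twice continuously differentiable and define G : ℂⁿ \ {0} → ℝ by G(z) = η(1/‖z‖²), where ‖z‖² = |z₁|² + ⋯ + |zₙ|². Then at any point (z₁, 0, …, 0) on the punctured z₁-axis, writing ξ = 1/|z₁|², the mixed Wirtinger Hessian (∂²G/∂z_j∂conj(z_k)) is diagonal with (1,1)-entry ξ²·(η'(ξ) + ξ·η''(ξ)) and with (j,j)-entry equal to −ξ²·η'(ξ) for every j ≥ 2, where ∂/∂z_j = ½(∂/∂x_j − i·∂/∂y_j) and ∂/∂conj(z_k) = ½(∂/∂x_k + i·∂/∂y_k). -/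
/-!
Write `s = ‖z‖²` and `ψ(s) = η(1/s)`, so that `G = ψ ∘ s` off the origin. The Wirtinger chain rule,
with `∂s/∂conj(z_k) = z_k` and `∂s/∂z_j = conj(z_j)`, gives `∂G/∂conj(z_k) = ψ'(s) z_k` on the whole
punctured space (`wirtDBar_radial`) and then
`∂²G/∂z_j∂conj(z_k) = ψ''(s) conj(z_j) z_k + ψ'(s) δ_{jk}` (`wirtD_radial`).
On the `z₁`-axis the rank-one term survives only in the `(1,1)`-entry, and
`ψ'(s) = -η'(1/s)/s²`, `ψ''(s) = η''(1/s)/s⁴ + 2η'(1/s)/s³` (`hasDerivAt_comp_inv`,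
`hasDerivAt_deriv_comp_inv`) yield the stated values.
-/

/-- Partial derivative in the real direction `x_j`. -/
noncomputable def pderivX (n : ℕ) (j : Fin n) (f : (Fin n → ℂ) → ℂ)
    (z : Fin n → ℂ) : ℂ :=
  deriv (fun t : ℝ => f (Function.update z j (z j + (t : ℂ)))) 0

/-- Partial derivative in the imaginary direction `y_j`. -/
noncomputable def pderivY (n : ℕ) (j : Fin n) (f : (Fin n → ℂ) → ℂ)
    (z : Fin n → ℂ) : ℂ :=
  deriv (fun t : ℝ => f (Function.update z j (z j + (t : ℂ) * Complex.I))) 0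

/-- Wirtinger derivative `∂/∂z_j = ½(∂/∂x_j − i·∂/∂y_j)`. -/
noncomputable def wirtD (n : ℕ) (j : Fin n) (f : (Fin n → ℂ) → ℂ)
    (z : Fin n → ℂ) : ℂ :=
  (1 / 2) * (pderivX n j f z - Complex.I * pderivY n j f z)

/-- Conjugate Wirtinger derivative `∂/∂conj(z_k) = ½(∂/∂x_k + i·∂/∂y_k)`. -/
noncomputable def wirtDBar (n : ℕ) (k : Fin n) (f : (Fin n → ℂ) → ℂ)
    (z : Fin n → ℂ) : ℂ :=
  (1 / 2) * (pderivX n k f z + Complex.I * pderivY n k f z)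

/-- The squared Euclidean norm; the norm on `Fin n → ℂ` itself is the sup norm. -/
noncomputable def normSqSum {n : ℕ} (z : Fin n → ℂ) : ℝ := ∑ i, ‖z i‖ ^ 2

lemma normSqSum_pos {n : ℕ} {z : Fin n → ℂ} (hz : z ≠ 0) : 0 < normSqSum z := by
  obtain ⟨i, hi⟩ := Function.ne_iff.mp hz
  have hi' : z i ≠ 0 := hi
  exact Finset.sum_pos' (fun _ _ => by positivity) ⟨i, Finset.mem_univ i, by positivity⟩

lemma hasDerivAt_line_apply {n : ℕ} (z : Fin n → ℂ) (j i : Fin n) (c : ℂ) :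
    HasDerivAt (fun t : ℝ => Function.update z j (z j + (t : ℂ) * c) i)
      (if j = i then c else 0) 0 := by
  by_cases h : j = i
  · subst h
    simpa using (((hasDerivAt_id (0 : ℝ)).ofReal_comp).mul_const c).const_add (z j)
  · simpa [h, Function.update_of_ne (Ne.symm h)] using hasDerivAt_const (0 : ℝ) (z i)

lemma hasDerivAt_normSqSum_line {n : ℕ} (z : Fin n → ℂ) (j : Fin n) (c : ℂ) :
    HasDerivAt (fun t : ℝ => normSqSum (Function.update z j (z j + (t : ℂ) * c)))
      (2 * inner ℝ (z j) c) 0 := by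
  have h := HasDerivAt.fun_sum (u := Finset.univ)
    (fun i _ => (hasDerivAt_line_apply z j i c).norm_sq)
  refine h.congr_deriv ?_
  rw [Finset.sum_eq_single j]
  · simp
  · intro i _ hi
    simp [Ne.symm hi]
  · simp

lemma line_eventually_ne_zero {n : ℕ} {z : Fin n → ℂ} (hz : z ≠ 0) (j : Fin n) (c : ℂ) :
    ∀ᶠ t : ℝ in nhds 0, Function.update z j (z j + (t : ℂ) * c) ≠ 0 := by
  obtain ⟨i, hi⟩ := Function.ne_iff.mp hz
  have hc := (hasDerivAt_line_apply z j i c).continuousAt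
  have h0 : Function.update z j (z j + ((0 : ℝ) : ℂ) * c) i ≠ 0 := by simpa using hi
  filter_upwards [hc.eventually_ne h0] with t ht h
  exact ht (by rw [h]; rfl)

/-- Chain rule for a radial function along the real line `t ↦ z + t c e_j`. -/
lemma hasDerivAt_radial_line {n : ℕ} {h : ℝ → ℝ} {d : ℝ} {z : Fin n → ℂ}
    (hh : HasDerivAt h d (normSqSum z)) (j : Fin n) (c : ℂ) :
    HasDerivAt (fun t : ℝ =>
        ((h (normSqSum (Function.update z j (z j + (t : ℂ) * c))) : ℝ) : ℂ))
      ((d * (2 * inner ℝ (z j) c) : ℝ) : ℂ) 0 := by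
  have hz : normSqSum (Function.update z j (z j + ((0 : ℝ) : ℂ) * c)) = normSqSum z := by simp
  exact (HasDerivAt.comp (0 : ℝ) (h₂ := h) (by rw [hz]; exact hh)
    (hasDerivAt_normSqSum_line z j c)).ofReal_comp

/-- `∂ψ(‖z‖²)/∂conj(z_k) = ψ'(‖z‖²) z_k`. -/
lemma wirtDBar_radial {n : ℕ} {ψ : ℝ → ℝ} {d : ℝ} {G : (Fin n → ℂ) → ℂ}
    (hG : ∀ z, z ≠ 0 → G z = ((ψ (normSqSum z) : ℝ) : ℂ)) {z : Fin n → ℂ} (hz : z ≠ 0)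
    (hψ : HasDerivAt ψ d (normSqSum z)) (k : Fin n) :
    wirtDBar n k G z = (d : ℂ) * z k := by
  have key : ∀ c : ℂ, deriv (fun t : ℝ => G (Function.update z k (z k + (t : ℂ) * c))) 0 =
      ((d * (2 * inner ℝ (z k) c) : ℝ) : ℂ) := fun c => by
    refine ((hasDerivAt_radial_line hψ k c).congr_of_eventuallyEq ?_).deriv
    filter_upwards [line_eventually_ne_zero hz k c] with t ht using hG _ ht
  have hX := key 1
  have hY := key Complex.I
  simp only [mul_one] at hX
  rw [wirtDBar, pderivX, pderivY, hX, hY]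
  apply Complex.ext <;> simp [Complex.inner] <;> ring

/-- `∂(φ(‖z‖²) z_k)/∂z_j = φ'(‖z‖²) conj(z_j) z_k + φ(‖z‖²) δ_{jk}`. -/
lemma wirtD_radial {n : ℕ} {φ : ℝ → ℝ} {d : ℝ} {F : (Fin n → ℂ) → ℂ} (k : Fin n)
    (hF : ∀ z, z ≠ 0 → F z = ((φ (normSqSum z) : ℝ) : ℂ) * z k) {z : Fin n → ℂ} (hz : z ≠ 0)
    (hφ : HasDerivAt φ d (normSqSum z)) (j : Fin n) :
    wirtD n j F z = (d : ℂ) * (starRingEnd ℂ (z j)) * z k +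
      (φ (normSqSum z) : ℂ) * (if j = k then 1 else 0) := by
  have key : ∀ c : ℂ, deriv (fun t : ℝ => F (Function.update z j (z j + (t : ℂ) * c))) 0 =
      ((d * (2 * inner ℝ (z j) c) : ℝ) : ℂ) * z k +
        (φ (normSqSum z) : ℂ) * (if j = k then c else 0) := fun c => by
    have h := (hasDerivAt_radial_line hφ j c).mul (hasDerivAt_line_apply z j k c)
    have h' := (h.congr_of_eventuallyEq
      (f₁ := fun t : ℝ => F (Function.update z j (z j + (t : ℂ) * c))) (by
        filter_upwards [line_eventually_ne_zero hz j c] with t ht using hF _ ht)).deriv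
    simpa using h'
  have hX := key 1
  have hY := key Complex.I
  simp only [mul_one] at hX
  rw [wirtD, pderivX, pderivY, hX, hY]
  by_cases hjk : j = k
  · simp only [hjk, if_true]
    apply Complex.ext <;> simp [Complex.inner] <;> ring
  · simp only [hjk, if_false]
    apply Complex.ext <;> simp [Complex.inner] <;> ring

lemma hasDerivAt_comp_inv {η : ℝ → ℝ} (hη : ContDiffOn ℝ 2 η (Set.Ioi 0)) {s : ℝ} (hs : 0 < s) :
    HasDerivAt (fun s => η (1 / s)) (-(deriv η (1 / s) / s ^ 2)) s := by
  have hp : 0 < 1 / s := by positivity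
  have h1 : HasDerivAt η (deriv η (1 / s)) (1 / s) :=
    ((hη.differentiableOn (by norm_num)).differentiableAt (Ioi_mem_nhds hp)).hasDerivAt
  have h2 : HasDerivAt (fun s : ℝ => 1 / s) (-(s ^ 2)⁻¹) s := by
    simpa using hasDerivAt_inv hs.ne'
  exact (h1.comp s h2).congr_deriv (by ring)

lemma hasDerivAt_deriv_comp_inv {η : ℝ → ℝ} (hη : ContDiffOn ℝ 2 η (Set.Ioi 0)) {s : ℝ}
    (hs : 0 < s) :
    HasDerivAt (fun s => -(deriv η (1 / s) / s ^ 2))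
      (deriv (deriv η) (1 / s) / s ^ 4 + 2 * deriv η (1 / s) / s ^ 3) s := by
  have hp : 0 < 1 / s := by positivity
  have hd : ContDiffOn ℝ 1 (deriv η) (Set.Ioi 0) :=
    hη.deriv_of_isOpen isOpen_Ioi (by norm_num)
  have h1 : HasDerivAt (deriv η) (deriv (deriv η) (1 / s)) (1 / s) :=
    ((hd.differentiableOn (by norm_num)).differentiableAt (Ioi_mem_nhds hp)).hasDerivAt
  have h2 : HasDerivAt (fun s : ℝ => 1 / s) (-(s ^ 2)⁻¹) s := by
    simpa using hasDerivAt_inv hs.ne'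
  refine (((h1.comp s h2).div (hasDerivAt_pow 2 s) (by positivity)).neg).congr_deriv ?_
  simp only [Function.comp]
  field_simp
  ring

/-- Mixed Wirtinger Hessian of the pulled-back compactified potential
`G(z) = η(1/‖z‖²)` on the punctured `z₁`-axis (equation (2.9) of the paper): writing
`ξ = 1/|z₁|²`, the Hessian is diagonal with `(1,1)`-entry `ξ²(η'(ξ) + ξη''(ξ))` and
`(j,j)`-entry `−ξ²·η'(ξ)` for `j ≥ 2`. -/
theorem stmt_7 (n : ℕ) (η : ℝ → ℝ) (hη : ContDiffOn ℝ 2 η (Set.Ioi 0))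
    (G : (Fin (n+1) → ℂ) → ℂ)
    (hG : ∀ z : Fin (n+1) → ℂ, z ≠ 0 →
      G z = ((η (1 / ∑ i, ‖z i‖ ^ 2) : ℝ) : ℂ)) :
    ∀ w : ℂ, w ≠ 0 → ∀ j k : Fin (n+1),
      wirtD (n+1) j (wirtDBar (n+1) k G) (fun i => if i = 0 then w else 0) =
        if j = k then
          (if j = 0 then
            (((1 / ‖w‖ ^ 2) ^ 2
                * (deriv η (1 / ‖w‖ ^ 2)
                    + (1 / ‖w‖ ^ 2) * deriv (deriv η) (1 / ‖w‖ ^ 2)) : ℝ) : ℂ)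
          else ((-((1 / ‖w‖ ^ 2) ^ 2 * deriv η (1 / ‖w‖ ^ 2)) : ℝ) : ℂ))
        else 0 := by
  intro w hw j k
  set p : Fin (n + 1) → ℂ := fun i => if i = 0 then w else 0 with hp
  have hp0 : p ≠ 0 := Function.ne_iff.mpr ⟨0, by simpa [hp] using hw⟩
  have hs : normSqSum p = ‖w‖ ^ 2 := by
    rw [normSqSum, Finset.sum_eq_single 0]
    · simp [hp]
    · intro i _ hi
      simp [hp, hi]
    · simp
  have hF : ∀ z : Fin (n + 1) → ℂ, z ≠ 0 → wirtDBar (n + 1) k G z =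
      ((-(deriv η (1 / normSqSum z) / normSqSum z ^ 2) : ℝ) : ℂ) * z k := fun z hz =>
    wirtDBar_radial (ψ := fun s => η (1 / s)) hG hz (hasDerivAt_comp_inv hη (normSqSum_pos hz)) k
  rw [wirtD_radial (φ := fun s => -(deriv η (1 / s) / s ^ 2)) k hF hp0
    (hasDerivAt_deriv_comp_inv hη (normSqSum_pos hp0)) j, hs]
  have hw' : (‖w‖ : ℂ) ≠ 0 := by exact_mod_cast norm_ne_zero_iff.mpr hw
  by_cases hjk : j = k
  · subst hjk
    by_cases hj : j = 0
    · have hww : starRingEnd ℂ w * w = (‖w‖ : ℂ) ^ 2 := Complex.conj_mul' w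
      simp only [hp, hj, if_true, mul_assoc, hww]
      push_cast
      field_simp
      ring
    · simp only [hp, hj, if_true, if_false]
      push_cast
      field_simp
      simp
  · by_cases hj : j = 0
    · have hk : k ≠ 0 := fun h => hjk (hj.trans h.symm)
      simp [hp, hjk, hk]
    · simp [hp, hjk, hj]
end

section
/- Let φ : (0,∞) → ℝ be twice continuously differentiable with φ'(z) > 0 for all z > 0. Set u(z) = 1/(z·φ'(z)), let ψ be an antiderivative of z ↦ -1/(z²·φ'(z)), and put η(ξ) = ψ(1/ξ) for ξ > 0. Define F(z) = φ(‖z‖²) and G(z) = η(1/‖z‖²) on ℂⁿ \ {0}. Then at any point p = (z₁, 0, …, 0) with z = |z₁|² > 0, the mixed Wirtinger Hessians satisfy: ∂²G/∂z₁∂conj(z₁)(p) = u(z)²·∂²F/∂z₁∂conj(z₁)(p) and ∂²G/∂z_j∂conj(z_j)(p) = −u(z)²·∂²F/∂z_j∂conj(z_j)(p) for all j ≥ 2, with all off-diagonal entries of both Hessians vanishing at p. -/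
/-- The squared Euclidean norm `‖z‖²` on `ℂⁿ`; the norm instance on `Fin n → ℂ` is the
sup norm, so the sum is written out. -/
noncomputable def sqNorm {n : ℕ} (z : Fin n → ℂ) : ℝ := ∑ i, ‖z i‖ ^ 2

lemma sqNorm_pos {n : ℕ} {z : Fin n → ℂ} (hz : z ≠ 0) : 0 < sqNorm z := by
  obtain ⟨i, hi⟩ := Function.ne_iff.mp hz
  exact Finset.sum_pos' (fun _ _ => by positivity)
    ⟨i, Finset.mem_univ _, by have : 0 < ‖z i‖ := norm_pos_iff.mpr hi
                              positivity⟩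

lemma hasDerivAt_line_coord {n : ℕ} (z : Fin n → ℂ) (j i : Fin n) (v : ℂ) :
    HasDerivAt (fun t : ℝ => Function.update z j (z j + (t : ℂ) * v) i)
      (if i = j then v else 0) 0 := by
  by_cases h : i = j
  · subst h
    simpa using ((Complex.ofRealCLM.hasDerivAt (x := (0 : ℝ))).mul_const v).const_add (z i)
  · simpa [h] using hasDerivAt_const (0 : ℝ) (z i)

lemma hasDerivAt_line_sqNorm {n : ℕ} (z : Fin n → ℂ) (j : Fin n) (v : ℂ) :
    HasDerivAt (fun t : ℝ => sqNorm (Function.update z j (z j + (t : ℂ) * v)))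
      (2 * ((z j).re * v.re + (z j).im * v.im)) 0 := by
  have h := HasDerivAt.fun_sum (u := Finset.univ)
    fun i _ => (hasDerivAt_line_coord z j i v).norm_sq
  refine h.congr_deriv ?_
  rw [Finset.sum_eq_single j]
  · simp [Complex.inner, Complex.mul_re]
    ring
  · intro i _ hi
    simp [hi]
  · simp

lemma line_eventually_ne {n : ℕ} {z : Fin n → ℂ} (hz : z ≠ 0) (j : Fin n) (v : ℂ) :
    ∀ᶠ t : ℝ in nhds 0, Function.update z j (z j + (t : ℂ) * v) ≠ 0 := by
  have hc : ContinuousAt (fun t : ℝ => Function.update z j (z j + (t : ℂ) * v)) 0 :=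
    continuousAt_pi.mpr fun i => (hasDerivAt_line_coord z j i v).continuousAt
  exact hc.eventually_ne (by simpa using hz)

/-- Derivative at `z ≠ 0`, in the direction `v` of the `j`-th coordinate, of a function that
agrees with `f ∘ sqNorm` off the origin. -/
lemma hasDerivAt_line_radial {n : ℕ} {f : ℝ → ℝ} {c : ℝ} {H : (Fin n → ℂ) → ℂ}
    (hH : ∀ z, z ≠ 0 → H z = (f (sqNorm z) : ℂ)) {z : Fin n → ℂ} (hz : z ≠ 0)
    (hf : HasDerivAt f c (sqNorm z)) (j : Fin n) (v : ℂ) :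
    HasDerivAt (fun t : ℝ => H (Function.update z j (z j + (t : ℂ) * v)))
      ((c * (2 * ((z j).re * v.re + (z j).im * v.im)) : ℝ) : ℂ) 0 := by
  have h1 : HasDerivAt f c (sqNorm (Function.update z j (z j + ((0 : ℝ) : ℂ) * v))) := by
    simpa using hf
  refine (h1.comp (0 : ℝ) (hasDerivAt_line_sqNorm z j v)).ofReal_comp.congr_of_eventuallyEq ?_
  filter_upwards [line_eventually_ne hz j v] with t ht
  exact hH _ ht

lemma pderivX_eq {n : ℕ} {j : Fin n} {H : (Fin n → ℂ) → ℂ} {z : Fin n → ℂ} {d : ℂ}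
    (h : HasDerivAt (fun t : ℝ => H (Function.update z j (z j + (t : ℂ) * 1))) d 0) :
    pderivX n j H z = d := by
  simp only [mul_one] at h
  exact h.deriv

lemma wirtDBar_radial_s8 {n : ℕ} {f : ℝ → ℝ} {c : ℝ} {H : (Fin n → ℂ) → ℂ}
    (hH : ∀ z, z ≠ 0 → H z = (f (sqNorm z) : ℂ)) {z : Fin n → ℂ} (hz : z ≠ 0)
    (hf : HasDerivAt f c (sqNorm z)) (k : Fin n) :
    wirtDBar n k H z = c * z k := by
  have hX := pderivX_eq (hasDerivAt_line_radial hH hz hf k 1)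
  have hY : pderivY n k H z = _ := (hasDerivAt_line_radial hH hz hf k Complex.I).deriv
  rw [wirtDBar, hX, hY]
  apply Complex.ext <;> simp <;> ring

/-- The complex Hessian of a radial function off the origin. -/
lemma wirtD_wirtDBar_radial {n : ℕ} {f g : ℝ → ℝ} {c : ℝ} {H : (Fin n → ℂ) → ℂ}
    (hH : ∀ z, z ≠ 0 → H z = (f (sqNorm z) : ℂ))
    (hf : ∀ r > 0, HasDerivAt f (g r) r) {z : Fin n → ℂ} (hz : z ≠ 0)
    (hg : HasDerivAt g c (sqNorm z)) (j k : Fin n) :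
    wirtD n j (wirtDBar n k H) z
      = (if k = j then (g (sqNorm z) : ℂ) else 0) + c * (starRingEnd ℂ (z j)) * z k := by
  have key : ∀ v : ℂ, HasDerivAt
      (fun t : ℝ => wirtDBar n k H (Function.update z j (z j + (t : ℂ) * v)))
      (((c * (2 * ((z j).re * v.re + (z j).im * v.im)) : ℝ) : ℂ) * z k
        + g (sqNorm z) * (if k = j then v else 0)) 0 := by
    intro v
    have h1 := (hasDerivAt_line_radial (H := fun z => (g (sqNorm z) : ℂ))
      (fun _ _ => rfl) hz hg j v).mul (hasDerivAt_line_coord z j k v)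
    simp only [Complex.ofReal_zero, zero_mul, add_zero, Function.update_eq_self] at h1
    refine h1.congr_of_eventuallyEq ?_
    filter_upwards [line_eventually_ne hz j v] with t ht
    exact wirtDBar_radial_s8 hH ht (hf _ (sqNorm_pos ht)) k
  have hX := pderivX_eq (key 1)
  have hY : pderivY n j (wirtDBar n k H) z = _ := (key Complex.I).deriv
  rw [wirtD, hX, hY]
  split_ifs
  · apply Complex.ext <;> simp <;> ring
  · apply Complex.ext <;> simp <;> ring

/-- Analytic core of Theorem 1.3: with conformal factor `u = 1/(z·φ')` and compactified
potential `η(ξ) = ψ(1/ξ)`, `ψ' = -1/(z²·φ')`, the mixed Wirtinger Hessians of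
`F(z) = φ(‖z‖²)` and `G(z) = η(1/‖z‖²)` at a point `p = (z₁, 0, …, 0)` with
`z = |z₁|² > 0` satisfy `G_{1 1̄} = u(z)²·F_{1 1̄}`, `G_{j j̄} = -u(z)²·F_{j j̄}` for
`j ≥ 2`, and all off-diagonal entries vanish. -/
theorem stmt_8 (n : ℕ) (φ ψ η u : ℝ → ℝ)
    (hφ : ContDiffOn ℝ 2 φ (Set.Ioi 0))
    (hφ' : ∀ z > (0:ℝ), 0 < deriv φ z)
    (hu : ∀ z > (0:ℝ), u z = 1 / (z * deriv φ z))
    (hψ : ∀ z > (0:ℝ), HasDerivAt ψ (-(1 / (z ^ 2 * deriv φ z))) z)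
    (hη : ∀ ξ > (0:ℝ), η ξ = ψ (1 / ξ))
    (F G : (Fin (n+1) → ℂ) → ℂ)
    (hF : ∀ z : Fin (n+1) → ℂ, F z = ((φ (∑ i, ‖z i‖ ^ 2) : ℝ) : ℂ))
    (hG : ∀ z : Fin (n+1) → ℂ, z ≠ 0 →
      G z = ((η (1 / ∑ i, ‖z i‖ ^ 2) : ℝ) : ℂ)) :
    ∀ w : ℂ, w ≠ 0 →
      (wirtD (n+1) 0 (wirtDBar (n+1) 0 G) (fun i => if i = 0 then w else 0)
          = ((u (‖w‖ ^ 2) : ℝ) : ℂ) ^ 2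
              * wirtD (n+1) 0 (wirtDBar (n+1) 0 F) (fun i => if i = 0 then w else 0)) ∧
      (∀ j : Fin (n+1), j ≠ 0 →
        wirtD (n+1) j (wirtDBar (n+1) j G) (fun i => if i = 0 then w else 0)
          = -(((u (‖w‖ ^ 2) : ℝ) : ℂ) ^ 2)
              * wirtD (n+1) j (wirtDBar (n+1) j F) (fun i => if i = 0 then w else 0)) ∧
      (∀ j k : Fin (n+1), j ≠ k →
        wirtD (n+1) j (wirtDBar (n+1) k G) (fun i => if i = 0 then w else 0) = 0 ∧
        wirtD (n+1) j (wirtDBar (n+1) k F) (fun i => if i = 0 then w else 0) = 0) := by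
  intro w hw
  set p : Fin (n+1) → ℂ := fun i => if i = 0 then w else 0 with hp
  have hp0 : p ≠ 0 := fun h => hw (by simpa [hp] using congrFun h 0)
  have hr : 0 < ‖w‖ ^ 2 := by
    have := norm_pos_iff.mpr hw
    positivity
  have hS : sqNorm p = ‖w‖ ^ 2 := by
    rw [sqNorm, Finset.sum_eq_single 0] <;> simp +contextual [hp]
  have hφ1 : ∀ r > 0, HasDerivAt φ (deriv φ r) r := fun r h =>
    ((hφ.contDiffAt (Ioi_mem_nhds h)).differentiableAt (by norm_num)).hasDerivAt
  have hφ2 : HasDerivAt (deriv φ) (deriv (deriv φ) (‖w‖ ^ 2)) (‖w‖ ^ 2) := by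
    have h : ContDiffOn ℝ 1 (deriv φ) (Set.Ioi 0) :=
      hφ.deriv_of_isOpen isOpen_Ioi (by norm_num)
    exact ((h.contDiffAt (Ioi_mem_nhds hr)).differentiableAt (by norm_num)).hasDerivAt
  have hGψ : ∀ z, z ≠ 0 → G z = (ψ (sqNorm z) : ℂ) := by
    intro z hz
    have h := sqNorm_pos hz
    rw [hG z hz]
    change ((η (1 / sqNorm z) : ℝ) : ℂ) = _
    rw [hη _ (by positivity), one_div_one_div]
  have hd := hφ' _ hr
  have huw := hu _ hr
  have hww : starRingEnd ℂ w * w = ((‖w‖ ^ 2 : ℝ) : ℂ) := by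
    rw [Complex.conj_mul', Complex.ofReal_pow]
  have hFH := wirtD_wirtDBar_radial (H := F) (fun z _ => hF z) hφ1 hp0 (hS ▸ hφ2)
  rw [hS] at hFH
  generalize ‖w‖ ^ 2 = r at *
  set a := deriv φ r with ha
  set b := deriv (deriv φ) r with hb
  have hψ2 : HasDerivAt (fun s => -(1 / (s ^ 2 * deriv φ s)))
      ((2 * r * a + r ^ 2 * b) / (r ^ 2 * a) ^ 2) r := by
    have h := (((hasDerivAt_pow 2 r).mul hφ2).inv (by simp [hr.ne', ← ha, hd.ne'])).fun_neg
    simp only [one_div]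
    refine h.congr_deriv ?_
    simp [← ha]
    ring
  have hGH := wirtD_wirtDBar_radial hGψ hψ hp0 (hS ▸ hψ2)
  rw [hS, ← ha] at hGH
  have hrC : (r : ℂ) ≠ 0 := by exact_mod_cast hr.ne'
  have haC : (a : ℂ) ≠ 0 := by exact_mod_cast hd.ne'
  have hp_zero : p 0 = w := by simp [hp]
  have hp_ne : ∀ j, j ≠ 0 → p j = 0 := fun j hj => by simp [hp, hj]
  have hoff : ∀ j k, j ≠ k → ∀ c : ℂ, c * (starRingEnd ℂ (p j)) * p k = 0 := by
    intro j k hjk c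
    by_cases hj : j = 0
    · simp [hp_ne k (fun hk => hjk (hj.trans hk.symm))]
    · simp [hp_ne j hj]
  refine ⟨?_, fun j hj => ?_, fun j k hjk => ⟨?_, ?_⟩⟩
  · rw [hGH, hFH, hp_zero, mul_assoc, mul_assoc (b : ℂ), hww, huw]
    push_cast
    simp only [if_true]
    field_simp
    ring
  · rw [hGH, hFH, hp_ne j hj, huw]
    push_cast
    simp only [if_true, mul_zero, add_zero]
    field_simp
  · rw [hGH, hoff j k hjk, if_neg hjk.symm, add_zero]
  · rw [hFH, hoff j k hjk, if_neg hjk.symm, add_zero]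
end
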